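/- Let K be a field, R = K[x_1, …, x_n], and G a finite group acting on R by degree-preserving K-algebra automorphisms, with char K not dividing |G|. Fix a monomial order on R, let S ⊆ R^G be a set of homogeneous invariant polynomials, and set I = ⟨S⟩. Then for every d ≥ 0, every homogeneous invariant b ∈ R^G_d can be written as b = Σ c_m Rey(m) + h, where the sum runs over monomials m of degree d with m ∉ lm(I), c_m ∈ K, and h ∈ I ∩ R^G is a homogeneous invariant of degree d lying in I. In particular, R^G_d is spanned as a K-vector space by the Reynolds images of the degree-d monomials outside lm(I) together with (I ∩ R^G)_d. -/

import Mathlib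

/-!
Dividing an invariant `b` of degree `d` by all of `I` leaves a remainder supported outside `lm(I)`;
its degree-`d` component `r` still is, and `b - r ∈ I` because `I` is homogeneous. The Reynolds
operator fixes `b`, sends `r` to the combination of the `Rey(x^u)` with the same coefficients, and
sends `b - r` to an invariant in `I`, since `I` is stable under the action.
-/

open MvPolynomial
open scoped MonomialOrder

/-- The Reynolds operator associated to an action of a finite group `G` on the
polynomial ring `K[x_1, …, x_n]` by `K`-algebra automorphisms. -/
noncomputable def Rey {n : ℕ} {K : Type*} [Field K] {G : Type*} [Group G] [Fintype G]
    (φ : G →* (MvPolynomial (Fin n) K ≃ₐ[K] MvPolynomial (Fin n) K))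
    (r : MvPolynomial (Fin n) K) : MvPolynomial (Fin n) K :=
  (Fintype.card G : K)⁻¹ • ∑ g : G, φ g r

/-- `u` is the leading monomial of `p` with respect to the monomial order `m`. -/
def IsLM {n : ℕ} {K : Type*} [CommSemiring K] (m : MonomialOrder (Fin n))
    (p : MvPolynomial (Fin n) K) (u : Fin n →₀ ℕ) : Prop :=
  u ∈ p.support ∧ ∀ v ∈ p.support, v ≠ u → v ≺[m] u

/-- `lm(I)`: the set of monomials (exponent vectors) occurring as the leading monomial of
some nonzero element of the ideal `I`. -/
def lmSet {n : ℕ} {K : Type*} [Field K] (m : MonomialOrder (Fin n))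
    (I : Ideal (MvPolynomial (Fin n) K)) : Set (Fin n →₀ ℕ) :=
  {u | ∃ p ∈ I, p ≠ 0 ∧ IsLM m p u}

theorem homogeneousComponent_mem_restrictSupport {σ R : Type*} [CommSemiring R]
    {s : Set (σ →₀ ℕ)} {p : MvPolynomial σ R} (hp : p ∈ restrictSupport R s) (d : ℕ) :
    homogeneousComponent d p ∈ restrictSupport R {u | u.degree = d ∧ u ∈ s} := by
  rw [mem_restrictSupport_iff] at hp ⊢
  intro u hu
  rw [Finset.mem_coe, support_homogeneousComponent, Finset.mem_filter] at hu
  exact ⟨hu.2, hp hu.1⟩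

attribute [local instance] MvPolynomial.gradedAlgebra

section StandardMonomials

variable {σ R : Type*} [CommRing R]

/-- The exponents of the standard monomials of an ideal, i.e. those outside `lm(I)`. Over a general
ring only elements with a unit leading coefficient count towards `lm(I)`, because these are the ones
one can divide by; over a field this excludes exactly the zero polynomial. -/
def standardExponents (m : MonomialOrder σ) (I : Ideal (MvPolynomial σ R)) : Set (σ →₀ ℕ) :=
  {u | ∀ p ∈ I, IsUnit (m.leadingCoeff p) → m.degree p ≠ u}

theorem exists_mem_restrictSupport_standardExponents_sub_mem (m : MonomialOrder σ)
    (I : Ideal (MvPolynomial σ R)) (p : MvPolynomial σ R) :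
    ∃ r ∈ restrictSupport R (standardExponents m I), p - r ∈ I := by
  obtain ⟨q, r, hp, -, hr⟩ :=
    m.div_set (B := {p | p ∈ I ∧ IsUnit (m.leadingCoeff p)}) (fun _ hp ↦ hp.2) p
  refine ⟨r, fun u hu p hpI hunit hpu ↦ hr u hu p ⟨hpI, hunit⟩ hpu.le, ?_⟩
  rw [hp, add_sub_cancel_right, Finsupp.linearCombination_apply]
  exact sum_mem fun p _ ↦ I.mul_mem_left _ p.2.1

theorem exists_mem_restrictSupport_standardExponents_sub_mem_of_isHomogeneous
    (m : MonomialOrder σ) {I : Ideal (MvPolynomial σ R)}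
    (hI : I.IsHomogeneous (homogeneousSubmodule σ R)) {d : ℕ}
    {p : MvPolynomial σ R} (hp : p.IsHomogeneous d) :
    ∃ r ∈ restrictSupport R {u | u.degree = d ∧ u ∈ standardExponents m I},
      p - r ∈ I ∧ (p - r).IsHomogeneous d := by
  obtain ⟨r, hr, hpr⟩ := exists_mem_restrictSupport_standardExponents_sub_mem m I p
  have hcomp : homogeneousComponent d (p - r) = p - homogeneousComponent d r := by
    rw [map_sub, homogeneousComponent_eq_self hp]
  refine ⟨homogeneousComponent d r, homogeneousComponent_mem_restrictSupport hr d, ?_, ?_⟩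
  · exact hcomp ▸ homogeneousComponent_mem_of_mem hI hpr d
  · exact hcomp ▸ homogeneousComponent_isHomogeneous d (p - r)

end StandardMonomials

theorem linearMap_apply_eq_sum_monomial {σ R M : Type*} [CommSemiring R] [AddCommMonoid M]
    [Module R M] (f : MvPolynomial σ R →ₗ[R] M) (p : MvPolynomial σ R) :
    f p = ∑ u ∈ p.support, p.coeff u • f (monomial u 1) := by
  conv_lhs => rw [p.as_sum, map_sum]
  refine Finset.sum_congr rfl fun u _ ↦ ?_
  rw [← map_smul, smul_monomial, smul_eq_mul, mul_one]

theorem averageMap_mem_of_mem_invtSubmodule {k G V : Type*} [CommRing k] [Group G] [Fintype G]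
    [Invertible (Fintype.card G : k)] [AddCommGroup V] [Module k V] {ρ : Representation k G V}
    {W : Submodule k V} (hW : W ∈ ρ.invtSubmodule) {v : V} (hv : v ∈ W) :
    ρ.averageMap v ∈ W :=
  ρ.asAlgebraHom_mem_of_forall_mem W (ρ.mem_invtSubmodule.mp hW) v hv _

theorem restrictScalars_span_mem_invtSubmodule {k G A : Type*} [CommSemiring k] [Monoid G]
    [CommSemiring A] [Algebra k A] {φ : G →* (A ≃ₐ[k] A)} {S : Set A}
    (hS : ∀ s ∈ S, ∀ g : G, φ g s = s) :
    (Ideal.span S).restrictScalars k ∈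
      Representation.invtSubmodule ((AlgEquiv.toLinearMapHom k A).comp φ) := by
  rw [Representation.mem_invtSubmodule]
  intro g
  have hle : Ideal.span S ≤ (Ideal.span S).comap (φ g) :=
    Ideal.span_le.mpr fun s hs ↦ by
      simpa only [SetLike.mem_coe, Ideal.mem_comap, hS s hs g] using Ideal.subset_span hs
  exact hle

theorem invariant_decomposition_reynolds_general {σ R G : Type*} [CommRing R] [Group G]
    [Fintype G] [Invertible (Fintype.card G : R)] (ρ : Representation R G (MvPolynomial σ R))
    (m : MonomialOrder σ) {I : Ideal (MvPolynomial σ R)}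
    (hI : I.IsHomogeneous (homogeneousSubmodule σ R))
    (hρI : I.restrictScalars R ∈ ρ.invtSubmodule) {d : ℕ}
    (hρd : homogeneousSubmodule σ R d ∈ ρ.invtSubmodule) {b : MvPolynomial σ R}
    (hb : b.IsHomogeneous d) (hbinv : b ∈ ρ.invariants) :
    ∃ (T : Finset (σ →₀ ℕ)) (c : (σ →₀ ℕ) → R) (h : MvPolynomial σ R),
      (∀ u ∈ T, u.degree = d ∧ u ∈ standardExponents m I) ∧
      h ∈ I ∧ h ∈ ρ.invariants ∧ h.IsHomogeneous d ∧
      b = (∑ u ∈ T, c u • ρ.averageMap (monomial u 1)) + h := by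
  obtain ⟨r, hr, hbrI, hbrd⟩ :=
    exists_mem_restrictSupport_standardExponents_sub_mem_of_isHomogeneous m hI hb
  refine ⟨r.support, fun u ↦ r.coeff u, ρ.averageMap (b - r), fun _ hu ↦ hr hu,
    averageMap_mem_of_mem_invtSubmodule hρI hbrI, ρ.averageMap_invariant _,
    averageMap_mem_of_mem_invtSubmodule hρd hbrd, ?_⟩
  rw [← linearMap_apply_eq_sum_monomial, ← map_add, add_sub_cancel, ρ.averageMap_id b hbinv]

theorem isLM_iff_ne_zero_and_degree_eq {n : ℕ} {K : Type*} [CommSemiring K]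
    {m : MonomialOrder (Fin n)} {p : MvPolynomial (Fin n) K} {u : Fin n →₀ ℕ} :
    IsLM m p u ↔ p ≠ 0 ∧ m.degree p = u := by
  constructor
  · rintro ⟨hu, hlt⟩
    have hp : p ≠ 0 := support_nonempty.mp ⟨u, hu⟩
    refine ⟨hp, by_contra fun hne ↦ ?_⟩
    exact (m.le_degree hu).not_gt (hlt _ (m.degree_mem_support hp) hne)
  · rintro ⟨hp, rfl⟩
    exact ⟨m.degree_mem_support hp,
      fun v hv hne ↦ (m.le_degree hv).lt_of_ne (m.toSyn.injective.ne hne)⟩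

theorem notMem_lmSet_iff_mem_standardExponents {n : ℕ} {K : Type*} [Field K]
    {m : MonomialOrder (Fin n)} {I : Ideal (MvPolynomial (Fin n) K)} {u : Fin n →₀ ℕ} :
    u ∉ lmSet m I ↔ u ∈ standardExponents m I := by
  simp [lmSet, standardExponents, isLM_iff_ne_zero_and_degree_eq]

theorem rey_eq_averageMap {n : ℕ} {K G : Type*} [Field K] [Group G] [Fintype G]
    [Invertible (Fintype.card G : K)]
    (φ : G →* (MvPolynomial (Fin n) K ≃ₐ[K] MvPolynomial (Fin n) K))
    (p : MvPolynomial (Fin n) K) :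
    Rey φ p = Representation.averageMap ((AlgEquiv.toLinearMapHom K _).comp φ) p := by
  simp [Rey, GroupAlgebra.average]

/-- Non-modular case, degree-preserving action, `S ⊆ R^G` a set of
homogeneous invariants, `I = ⟨S⟩`. Every homogeneous invariant `b` of degree `d` can be
written as `b = ∑ c_u • Rey(x^u) + h`, the sum running over monomials `u` of degree `d`
with `u ∉ lm(I)`, where `h ∈ I` is a homogeneous invariant of degree `d`. -/
theorem invariant_decomposition_reynolds {n : ℕ} {K : Type*} [Field K]
    {G : Type*} [Group G] [Fintype G]
    (φ : G →* (MvPolynomial (Fin n) K ≃ₐ[K] MvPolynomial (Fin n) K))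
    (hdeg : ∀ (g : G) (e : ℕ) (p : MvPolynomial (Fin n) K),
      p.IsHomogeneous e → (φ g p).IsHomogeneous e)
    (hnm : ¬ (ringChar K ∣ Fintype.card G))
    (m : MonomialOrder (Fin n))
    (S : Set (MvPolynomial (Fin n) K))
    (hSinv : ∀ s ∈ S, ∀ g : G, φ g s = s)
    (hShom : ∀ s ∈ S, ∃ e, MvPolynomial.IsHomogeneous s e)
    (d : ℕ) (b : MvPolynomial (Fin n) K)
    (hb : b.IsHomogeneous d) (hbinv : ∀ g : G, φ g b = b) :
    ∃ (T : Finset (Fin n →₀ ℕ)) (c : (Fin n →₀ ℕ) → K) (h : MvPolynomial (Fin n) K),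
      (∀ u ∈ T, u.degree = d ∧ u ∉ lmSet m (Ideal.span S)) ∧
      h ∈ Ideal.span S ∧ (∀ g : G, φ g h = h) ∧ h.IsHomogeneous d ∧
      b = (∑ u ∈ T, c u • Rey φ (monomial u (1 : K))) + h := by
  let _ := invertibleOfRingCharNotDvd hnm
  simp only [notMem_lmSet_iff_mem_standardExponents, rey_eq_averageMap]
  exact invariant_decomposition_reynolds_general ((AlgEquiv.toLinearMapHom K _).comp φ) m
    (Ideal.homogeneous_span _ S hShom) (restrictScalars_span_mem_invtSubmodule hSinv)
    ((Representation.mem_invtSubmodule _).mpr fun g p ↦ hdeg g d p) hb hbinv
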